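/- Let s ≥ 1, let 0 ≤ q ≤ s, and set n = T_s + q. If λ is a partition of n with deg(λ) = Δ_n, then A(λ) + B(λ) = ρ(q) and T_{A(λ)} + T_{B(λ)} ≤ q. -/

import Mathlib

/-!
Let `r`, `A`, `B` be the support, gap bonus and multiplicity bonus of a partition of `n`.
Everything rests on the inequality `T r + T A + T B ≤ n`. Each gap of a set of positive integers
skips an integer, so the maximum of the set is at least its size plus its number of gaps; building
the set up from its smallest element, the sum is at least the sum of the two triangular numbers.
Applied to the part sizes this gives `T r + T A`, and the second copies of the repeated sizes
contribute at least `T B` more.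

Conversely, if `T a + T b ≤ q ≤ s` with, by symmetry, `a ≤ b`, then the sizes
`1, …, s - a, s - a + 2, s - a + 4, …, s + a`, second copies of `1, …, b` and additional ones form a
partition of `T s + q` of degree at least `s (s - 1) + a + b`. Hence a maximizer has degree at least
`s (s - 1) + ρ(q)`.

For a maximizer, `T r ≤ T s + q < T (s + 1)` forces `r ≤ s`. If `r < s`, then `A, B ≤ r` bounds the
degree by `r (r + 1) ≤ s (s - 1)`, so `r = s - 1`, `A = B = r` and `q = 0`; but if every size is
repeated then `2 (T r + T A) ≤ n`, that is `4 T r ≤ T (r + 1)`, which is impossible for `r ≥ 1`. So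
`r = s`, the inequality reads `T A + T B ≤ q`, and maximality gives `A + B = ρ(q)`.
-/

namespace PartitionDegree

/-- The `m`-th triangular number. -/
def T (m : ℕ) : ℕ := m * (m + 1) / 2

/-- The number of distinct part sizes of a partition. -/
def supp {n : ℕ} (lam : n.Partition) : ℕ := lam.parts.toFinset.card

/-- The gap-bonus count: distinct part sizes `L ≥ 2` such that `L - 1` is not a part size. -/
def gapBonus {n : ℕ} (lam : n.Partition) : ℕ :=
  (lam.parts.toFinset.filter (fun L => 2 ≤ L ∧ (L - 1) ∉ lam.parts)).card

/-- The multiplicity-bonus count: distinct part sizes occurring with multiplicity at least 2. -/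
def multBonus {n : ℕ} (lam : n.Partition) : ℕ :=
  (lam.parts.toFinset.filter (fun L => 2 ≤ lam.parts.count L)).card

/-- The degree of a partition in the partition graph. -/
def deg {n : ℕ} (lam : n.Partition) : ℕ :=
  supp lam * (supp lam - 1) + gapBonus lam + multBonus lam

/-- The maximal degree over all partitions of `n`. -/
def maxDeg (n : ℕ) : ℕ := Finset.univ.sup (fun lam : n.Partition => deg lam)

/-- `ρ(q)`: the maximum of `a + b` over pairs with `T a + T b ≤ q`. -/
noncomputable def rho (q : ℕ) : ℕ := sSup {c : ℕ | ∃ a b : ℕ, c = a + b ∧ T a + T b ≤ q}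

/-- `mu` is the conjugate of `lam`: for each `k ≥ 1`, the multiplicity of `k` in `mu`
equals (number of parts of `lam` that are `≥ k`) minus (number of parts `≥ k + 1`). -/
def IsConjugate {n : ℕ} (lam mu : n.Partition) : Prop :=
  ∀ k : ℕ, 1 ≤ k →
    mu.parts.count k =
      Multiset.countP (fun p => k ≤ p) lam.parts -
        Multiset.countP (fun p => k + 1 ≤ p) lam.parts

/-! ### Triangular numbers -/

lemma T_succ (m : ℕ) : T (m + 1) = T m + (m + 1) := by
  simpa only [T, Nat.add_sub_cancel, mul_comm] using Nat.triangle_succ (m + 1)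

lemma T_strictMono : StrictMono T :=
  strictMono_nat_of_lt_succ fun m => by rw [T_succ]; omega

lemma le_T (m : ℕ) : m ≤ T m :=
  T_strictMono.le_apply

lemma T_le_T_add {g g' : ℕ} (h : g' ≤ g + 1) : T g' ≤ T g + g' := by
  rcases h.lt_or_eq with hlt | rfl
  · exact (T_strictMono.monotone (Nat.lt_succ_iff.1 hlt)).trans (Nat.le_add_right _ _)
  · exact (T_succ g).le

lemma sum_Icc_one_eq_T (c : ℕ) : ∑ x ∈ Finset.Icc 1 c, x = T c := by
  induction c with
  | zero => rfl
  | succ c ih => rw [Finset.sum_Icc_succ_top (by omega), ih, T_succ]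

/-! ### Gaps of a finite set of positive integers -/

/-- The elements `L ≥ 2` of `S` whose predecessor is not in `S`; the gap bonus of a partition counts
the gaps of its set of part sizes. -/
def gaps (S : Finset ℕ) : Finset ℕ := S.filter (fun L => 2 ≤ L ∧ L - 1 ∉ S)

lemma mem_gaps {S : Finset ℕ} {x : ℕ} : x ∈ gaps S ↔ x ∈ S ∧ 2 ≤ x ∧ x - 1 ∉ S :=
  Finset.mem_filter

lemma gaps_insert_subset (m : ℕ) (S : Finset ℕ) : gaps (insert m S) ⊆ insert m (gaps S) := by
  intro x
  simp only [mem_gaps, Finset.mem_insert]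
  tauto

lemma gaps_insert_of_succ_lt {S : Finset ℕ} {m : ℕ} (hm : 2 ≤ m) (hS : ∀ x ∈ S, x + 1 < m) :
    gaps (insert m S) = insert m (gaps S) := by
  refine (gaps_insert_subset m S).antisymm fun x hx => ?_
  simp only [mem_gaps, Finset.mem_insert] at hx ⊢
  rcases hx with rfl | ⟨hxS, hx2, hpred⟩
  · refine ⟨Or.inl rfl, hm, ?_⟩
    rintro (h | h)
    · omega
    · have := hS _ h
      omega
  · have := hS x hxS
    refine ⟨Or.inr hxS, hx2, ?_⟩
    rintro (h | h)
    · omega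
    · exact hpred h

-- `L ↦ L - 1` injects the gaps into the integers of `[1, M]` missing from `S`.
lemma card_add_card_gaps_le {S : Finset ℕ} {M : ℕ} (hS : S ⊆ Finset.Icc 1 M) :
    S.card + (gaps S).card ≤ M := by
  have hmissing : (gaps S).card ≤ (Finset.Icc 1 M \ S).card := by
    refine Finset.card_le_card_of_injOn (· - 1) (fun x hx => ?_) (fun x hx y hy hxy => ?_)
    · obtain ⟨hxS, hx2, hpred⟩ := mem_gaps.1 hx
      have hxM := Finset.mem_Icc.1 (hS hxS)
      have hmem : x - 1 ∈ Finset.Icc 1 M := Finset.mem_Icc.2 (by omega)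
      exact Finset.mem_sdiff.2 ⟨hmem, hpred⟩
    · have hx2 := (mem_gaps.1 hx).2.1
      have hy2 := (mem_gaps.1 hy).2.1
      simp only at hxy
      omega
  have hcard := Finset.card_sdiff_add_card_eq_card hS
  rw [Nat.card_Icc, Nat.add_sub_cancel] at hcard
  omega

lemma T_card_add_T_card_gaps_le_sum {S : Finset ℕ} (hpos : ∀ x ∈ S, 0 < x) :
    T S.card + T (gaps S).card ≤ ∑ x ∈ S, x := by
  induction S using Finset.induction_on_max with
  | empty => rfl
  | insert m S hm ih =>
    have hmS : m ∉ S := fun h => (hm m h).false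
    have hmax : S.card + 1 + (gaps (insert m S)).card ≤ m := by
      rw [← Finset.card_insert_of_notMem hmS]
      refine card_add_card_gaps_le fun x hx => Finset.mem_Icc.2 ⟨hpos x hx, ?_⟩
      rcases Finset.mem_insert.1 hx with rfl | hxS
      · exact le_rfl
      · exact (hm x hxS).le
    have hgaps : (gaps (insert m S)).card ≤ (gaps S).card + 1 :=
      (Finset.card_le_card (gaps_insert_subset m S)).trans (Finset.card_insert_le _ _)
    have hT := T_le_T_add hgaps
    have hsum := ih fun x hx => hpos x (Finset.mem_insert_of_mem hx)
    rw [Finset.sum_insert hmS, Finset.card_insert_of_notMem hmS, T_succ]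
    omega

/-! ### Upper bounds on the bonuses and the degree -/

/-- The distinct elements of multiplicity at least `2`; the multiplicity bonus of a partition counts
those of its multiset of parts. -/
def repeated {α : Type*} [DecidableEq α] (P : Multiset α) : Finset α :=
  P.toFinset.filter (fun L => 2 ≤ P.count L)

section

variable {n : ℕ} (lam : n.Partition)

lemma gapBonus_eq_card_gaps : gapBonus lam = (gaps lam.parts.toFinset).card := by
  simp only [gapBonus, gaps, Multiset.mem_toFinset]

lemma multBonus_eq_card_repeated : multBonus lam = (repeated lam.parts).card :=
  rfl

lemma gapBonus_le_supp : gapBonus lam ≤ supp lam :=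
  Finset.card_filter_le _ _

lemma multBonus_le_supp : multBonus lam ≤ supp lam :=
  Finset.card_filter_le _ _

lemma pos_of_mem_toFinset_parts : ∀ x ∈ lam.parts.toFinset, 0 < x :=
  fun _ hx => lam.parts_pos (Multiset.mem_toFinset.1 hx)

lemma supp_pos (hn : 0 < n) : 0 < supp lam := by
  refine Finset.card_pos.2 (Multiset.toFinset_nonempty.2 fun hparts => hn.ne ?_)
  rw [← lam.parts_sum, hparts, Multiset.sum_zero]

lemma sum_toFinset_add_sum_repeated_le :
    ∑ x ∈ lam.parts.toFinset, x + ∑ x ∈ repeated lam.parts, x ≤ n := by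
  calc ∑ x ∈ lam.parts.toFinset, x + ∑ x ∈ repeated lam.parts, x
      = ∑ x ∈ lam.parts.toFinset, (x + if 2 ≤ lam.parts.count x then x else 0) := by
        rw [repeated, Finset.sum_filter, Finset.sum_add_distrib]
    _ ≤ ∑ x ∈ lam.parts.toFinset, lam.parts.count x * x := by
        refine Finset.sum_le_sum fun x hx => ?_
        have : 1 ≤ lam.parts.count x :=
          Multiset.one_le_count_iff_mem.2 (Multiset.mem_toFinset.1 hx)
        split_ifs <;> nlinarith
    _ = n := by
        simpa only [smul_eq_mul, lam.parts_sum] using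
          (Finset.sum_multiset_count lam.parts).symm

lemma T_supp_add_T_gapBonus_add_T_multBonus_le :
    T (supp lam) + T (gapBonus lam) + T (multBonus lam) ≤ n := by
  have hpos := pos_of_mem_toFinset_parts lam
  have hsizes : T (supp lam) + T (gapBonus lam) ≤ ∑ x ∈ lam.parts.toFinset, x := by
    rw [gapBonus_eq_card_gaps]
    exact T_card_add_T_card_gaps_le_sum hpos
  have hrepeated : T (multBonus lam) ≤ ∑ x ∈ repeated lam.parts, x :=
    (Nat.le_add_right _ _).trans <| T_card_add_T_card_gaps_le_sum fun x hx =>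
      hpos x (Finset.filter_subset _ _ hx)
  exact (add_le_add hsizes hrepeated).trans (sum_toFinset_add_sum_repeated_le lam)

lemma two_mul_le_of_multBonus_eq_supp (hB : multBonus lam = supp lam) :
    2 * (T (supp lam) + T (gapBonus lam)) ≤ n := by
  have hall : repeated lam.parts = lam.parts.toFinset :=
    Finset.filter_eq_self.2 (Finset.card_filter_eq_iff.1 hB)
  have hsum := sum_toFinset_add_sum_repeated_le lam
  rw [hall, ← two_mul] at hsum
  rw [gapBonus_eq_card_gaps]
  exact (Nat.mul_le_mul_left 2
    (T_card_add_T_card_gaps_le_sum (pos_of_mem_toFinset_parts lam))).trans hsum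

lemma succ_mul_self (r : ℕ) : (r + 1) * r = r * (r - 1) + 2 * r := by
  cases r with
  | zero => rfl
  | succ k => rw [Nat.add_sub_cancel]; ring

lemma deg_le : deg lam ≤ (supp lam + 1) * supp lam := by
  have hA := gapBonus_le_supp lam
  have hB := multBonus_le_supp lam
  rw [succ_mul_self, deg]
  omega

variable {lam}

lemma supp_le_of_lt_T_succ {s : ℕ} (hn : n < T (s + 1)) : supp lam ≤ s := by
  have hT := T_supp_add_T_gapBonus_add_T_multBonus_le lam
  have hlt : T (supp lam) < T (s + 1) := by omega
  exact Nat.lt_succ_iff.1 (T_strictMono.lt_iff_lt.1 hlt)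

lemma deg_lt_of_le_T_supp_succ (hpos : 0 < n) (hn : n ≤ T (supp lam + 1)) :
    deg lam < (supp lam + 1) * supp lam := by
  refine (deg_le lam).lt_of_ne fun hdeg => ?_
  rw [succ_mul_self, deg] at hdeg
  have hA := gapBonus_le_supp lam
  have hB := multBonus_le_supp lam
  have hA_eq : gapBonus lam = supp lam := by omega
  have hB_eq : multBonus lam = supp lam := by omega
  have hfour := two_mul_le_of_multBonus_eq_supp lam hB_eq
  rw [hA_eq] at hfour
  rw [T_succ] at hn
  have hr := supp_pos lam hpos
  have hrT := le_T (supp lam)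
  omega

lemma deg_lt_of_supp_lt {s : ℕ} (hpos : 0 < n) (hn : n ≤ T s) (h : supp lam < s) :
    deg lam < s * (s - 1) := by
  rcases (Nat.succ_le_of_lt h).eq_or_lt with rfl | hlt
  · exact deg_lt_of_le_T_supp_succ hpos hn
  · exact (deg_le lam).trans_lt (Nat.mul_lt_mul'' hlt (by omega))

end

/-! ### A partition of large degree -/

lemma exists_partition_toFinset_eq {n : ℕ} {S R : Finset ℕ} (hpos : ∀ x ∈ S, 0 < x)
    (hone : 1 ∈ S) (hR : R ⊆ S) (hn : ∑ x ∈ S, x + ∑ x ∈ R, x ≤ n) :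
    ∃ lam : n.Partition, lam.parts.toFinset = S ∧ R ⊆ repeated lam.parts := by
  -- Additional ones fill up the sum; as `1` is a size already, they do not change the set of sizes.
  set P : Multiset ℕ :=
    S.val + R.val + Multiset.replicate (n - (∑ x ∈ S, x + ∑ x ∈ R, x)) 1 with hP
  have hmem : ∀ x, x ∈ P ↔ x ∈ S := by
    intro x
    simp only [hP, Multiset.mem_add, Finset.mem_val, Multiset.mem_replicate]
    constructor
    · rintro ((h | h) | ⟨-, rfl⟩)
      exacts [h, hR h, hone]
    · exact fun h => Or.inl (Or.inl h)
  have hsum : P.sum = n := by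
    rw [hP, Multiset.sum_add, Multiset.sum_add, Finset.sum_val, Finset.sum_val,
      Multiset.sum_replicate, smul_eq_mul, mul_one]
    exact Nat.add_sub_of_le hn
  refine ⟨⟨P, fun hx => hpos _ ((hmem _).1 hx), hsum⟩, ?_, fun x hx => ?_⟩
  · ext x
    rw [Multiset.mem_toFinset, hmem]
  · have hxS : 1 ≤ S.val.count x := Multiset.one_le_count_iff_mem.2 (hR hx)
    have hxR : 1 ≤ R.val.count x := Multiset.one_le_count_iff_mem.2 hx
    refine Finset.mem_filter.2 ⟨Multiset.mem_toFinset.2 ((hmem x).2 (hR hx)), ?_⟩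
    simp only [hP, Multiset.count_add]
    omega

/-- The set `{1, …, c, c + 2, c + 4, …, c + 2 a}`, which has the least sum among the sets of `c + a`
positive integers with `a` gaps. -/
def gappedSet (c : ℕ) : ℕ → Finset ℕ
  | 0 => Finset.Icc 1 c
  | a + 1 => insert (c + 2 * (a + 1)) (gappedSet c a)

lemma Icc_subset_gappedSet (c a : ℕ) : Finset.Icc 1 c ⊆ gappedSet c a := by
  induction a with
  | zero => exact subset_rfl
  | succ a ih => exact ih.trans (Finset.subset_insert _ _)

lemma gappedSet_subset_Icc (c a : ℕ) : gappedSet c a ⊆ Finset.Icc 1 (c + 2 * a) := by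
  induction a with
  | zero => exact subset_rfl
  | succ a ih =>
    refine Finset.insert_subset (Finset.mem_Icc.2 (by omega)) (ih.trans ?_)
    exact Finset.Icc_subset_Icc_right (by omega)

lemma notMem_gappedSet (c a : ℕ) : c + 2 * (a + 1) ∉ gappedSet c a := by
  intro h
  have := Finset.mem_Icc.1 (gappedSet_subset_Icc c a h)
  omega

lemma card_gappedSet (c a : ℕ) : (gappedSet c a).card = c + a := by
  induction a with
  | zero => rw [gappedSet, Nat.card_Icc]; rfl
  | succ a ih =>
    rw [gappedSet, Finset.card_insert_of_notMem (notMem_gappedSet c a), ih, add_assoc]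

lemma sum_gappedSet (c a : ℕ) : ∑ x ∈ gappedSet c a, x = T (c + a) + T a := by
  induction a with
  | zero => exact sum_Icc_one_eq_T c
  | succ a ih =>
    rw [gappedSet, Finset.sum_insert (notMem_gappedSet c a), ih, ← add_assoc c a 1, T_succ, T_succ]
    ring

lemma gaps_Icc_one (c : ℕ) : gaps (Finset.Icc 1 c) = ∅ := by
  refine Finset.filter_eq_empty_iff.2 fun x hx => ?_
  rw [Finset.mem_Icc] at hx ⊢
  omega

lemma card_gaps_gappedSet (c a : ℕ) : (gaps (gappedSet c a)).card = a := by
  induction a with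
  | zero => rw [gappedSet, gaps_Icc_one, Finset.card_empty]
  | succ a ih =>
    have hlt : ∀ x ∈ gappedSet c a, x + 1 < c + 2 * (a + 1) := fun x hx => by
      have := Finset.mem_Icc.1 (gappedSet_subset_Icc c a hx)
      omega
    have hnew : c + 2 * (a + 1) ∉ gaps (gappedSet c a) :=
      fun h => notMem_gappedSet c a (mem_gaps.1 h).1
    rw [gappedSet, gaps_insert_of_succ_lt (by omega) hlt, Finset.card_insert_of_notMem hnew, ih]

lemma exists_partition_le_deg {n s a b : ℕ} (ha : a < s) (hab : a + b ≤ s)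
    (hn : T s + T a + T b ≤ n) : ∃ lam : n.Partition, s * (s - 1) + a + b ≤ deg lam := by
  obtain ⟨c, rfl⟩ := Nat.exists_eq_add_of_le' ha.le
  have hIcc := Icc_subset_gappedSet c a
  have hsub : Finset.Icc 1 b ⊆ gappedSet c a :=
    (Finset.Icc_subset_Icc_right (by omega)).trans hIcc
  obtain ⟨lam, hsizes, hrepeated⟩ := exists_partition_toFinset_eq (n := n)
    (fun x hx => (Finset.mem_Icc.1 (gappedSet_subset_Icc c a hx)).1)
    (hIcc (Finset.mem_Icc.2 (by omega))) hsub (by rwa [sum_gappedSet, sum_Icc_one_eq_T])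
  have hsupp : supp lam = c + a := by rw [supp, hsizes, card_gappedSet]
  have hgap : gapBonus lam = a := by rw [gapBonus_eq_card_gaps, hsizes, card_gaps_gappedSet]
  have hmult : b ≤ multBonus lam := by
    simpa only [Nat.card_Icc, Nat.add_sub_cancel, multBonus_eq_card_repeated]
      using Finset.card_le_card hrepeated
  refine ⟨lam, ?_⟩
  rw [deg, hsupp, hgap]
  omega

/-! ### The maximal degree and `ρ` -/

lemma bddAbove_setOf_T_add_T_le (q : ℕ) :
    BddAbove {c : ℕ | ∃ a b : ℕ, c = a + b ∧ T a + T b ≤ q} := by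
  refine ⟨q, ?_⟩
  rintro c ⟨a, b, rfl, h⟩
  exact (add_le_add (le_T a) (le_T b)).trans h

lemma add_le_rho {q a b : ℕ} (h : T a + T b ≤ q) : a + b ≤ rho q :=
  le_csSup (bddAbove_setOf_T_add_T_le q) ⟨a, b, rfl, h⟩

lemma rho_pos {q : ℕ} (hq : 0 < q) : 0 < rho q :=
  add_le_rho (a := 1) (b := 0) hq

lemma exists_le_add_eq_rho (q : ℕ) : ∃ a b : ℕ, a ≤ b ∧ a + b = rho q ∧ T a + T b ≤ q := by
  obtain ⟨a, b, hrho, hT⟩ : rho q ∈ {c : ℕ | ∃ a b : ℕ, c = a + b ∧ T a + T b ≤ q} :=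
    Nat.sSup_mem ⟨0, 0, 0, rfl, Nat.zero_le q⟩ (bddAbove_setOf_T_add_T_le q)
  rcases le_total a b with h | h
  · exact ⟨a, b, h, hrho.symm, hT⟩
  · exact ⟨b, a, h, by rw [hrho, add_comm], by rwa [add_comm]⟩

lemma deg_le_maxDeg {n : ℕ} (lam : n.Partition) : deg lam ≤ maxDeg n :=
  Finset.le_sup (f := fun lam : n.Partition => deg lam) (Finset.mem_univ lam)

lemma add_rho_le_maxDeg {s q : ℕ} (hs : 1 ≤ s) (hqs : q ≤ s) :
    s * (s - 1) + rho q ≤ maxDeg (T s + q) := by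
  obtain ⟨a, b, hle, hrho, hT⟩ := exists_le_add_eq_rho q
  have hab : a + b ≤ s := (add_le_add (le_T a) (le_T b)).trans (hT.trans hqs)
  obtain ⟨lam, hlam⟩ := exists_partition_le_deg (n := T s + q) (show a < s by omega) hab (by omega)
  rw [← hrho, ← add_assoc]
  exact hlam.trans (deg_le_maxDeg lam)

lemma supp_eq_of_add_rho_le_deg {s q : ℕ} (hqs : q ≤ s) {lam : (T s + q).Partition}
    (hdeg : s * (s - 1) + rho q ≤ deg lam) : supp lam = s := by
  have hle : supp lam ≤ s := supp_le_of_lt_T_succ (by rw [T_succ]; omega)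
  refine hle.eq_of_not_lt fun hlt => hdeg.not_gt ?_
  rcases q.eq_zero_or_pos with rfl | hq
  · have hTs := le_T s
    exact (deg_lt_of_supp_lt (by omega) le_rfl hlt).trans_le (Nat.le_add_right _ _)
  · calc deg lam ≤ (supp lam + 1) * supp lam := deg_le lam
      _ ≤ s * (s - 1) := Nat.mul_le_mul hlt (by omega)
      _ < s * (s - 1) + rho q := Nat.lt_add_of_pos_right (rho_pos hq)

/-- profile constraint for maximizers: if `λ ⊢ T s + q` is
degree-maximizing then `A(λ) + B(λ) = ρ(q)` and `T_{A(λ)} + T_{B(λ)} ≤ q`. -/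
theorem profile_constraint (s q : ℕ) (hs : 1 ≤ s) (hqs : q ≤ s)
    (lam : (T s + q).Partition) (hmax : deg lam = maxDeg (T s + q)) :
    gapBonus lam + multBonus lam = rho q ∧
      T (gapBonus lam) + T (multBonus lam) ≤ q := by
  have hdeg : s * (s - 1) + rho q ≤ deg lam := hmax ▸ add_rho_le_maxDeg hs hqs
  have hsupp := supp_eq_of_add_rho_le_deg hqs hdeg
  have hbound := T_supp_add_T_gapBonus_add_T_multBonus_le lam
  rw [hsupp] at hbound
  have hT : T (gapBonus lam) + T (multBonus lam) ≤ q := by omega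
  rw [deg, hsupp] at hdeg
  exact ⟨(add_le_rho hT).antisymm (by omega), hT⟩

end PartitionDegree
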